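/- Let ε ∈ {0, 1/2} and j ∈ ℂ (with j − ε ∉ ℤ when 2j ∈ ℤ), and consider the coupling F_{1/2} ⊗ C^ε_j. For every M ∈ ε + 1/2 + ℤ, the 2×2 restriction Q_M of the Casimir 𝒬 to V_M is diagonalizable if and only if j ≠ −1/2, and in that case its eigenvalues are the two distinct values q_(−1/2) = −(j−1/2)(j+1/2) and q_(1/2) = −(j+1/2)(j+3/2). -/

import Mathlib

/-!
Couplings F_γ ⊗ C^ε_j for sl(2,ℝ).

Conventions: γ = G/2 with `G : ℕ`, `1 ≤ G`; ε is encoded by `E : ℂ` (with `E = 0 ∨ E = 1/2`);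
j ∈ ℂ. The space F_γ ⊗ C^ε_j has basis indexed by `(ν, z) : Fin (G+1) × ℤ`, the basis vector
`single (ν,z) 1` representing |γ, ν-γ⟩ ⊗ |j, ε+z⟩.
-/

noncomputable section

/-- Principal branch of the complex square root. -/
def csqrt (z : ℂ) : ℂ := z ^ ((1 : ℂ) / 2)

/-- C₊(j,m) = i √(j-m) √(j+m+1). -/
def Cp (j m : ℂ) : ℂ := Complex.I * csqrt (j - m) * csqrt (j + m + 1)

/-- C₋(j,m) = i √(j+m) √(j-m+1). -/
def Cm (j m : ℂ) : ℂ := Complex.I * csqrt (j + m) * csqrt (j - m + 1)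

/-- γ = G/2, as a complex number. -/
def gam (G : ℕ) : ℂ := (G : ℂ) / 2

/-- μ = ν - γ for ν : Fin (G+1). -/
def muc (G : ℕ) (ν : Fin (G + 1)) : ℂ := ((ν : ℕ) : ℂ) - gam G

/-- m = ε + z for z : ℤ. -/
def mcont (E : ℂ) (z : ℤ) : ℂ := E + (z : ℂ)

/-- The vector space F_γ ⊗ C^ε_j. -/
abbrev Wc (G : ℕ) := (Fin (G + 1) × ℤ) →₀ ℂ

/-- Basis vector with coefficient, out-of-range F_γ indices giving 0. -/
def eVc (G : ℕ) (i : ℤ) (z : ℤ) (c : ℂ) : Wc G :=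
  if h : 0 ≤ i ∧ i < (G : ℤ) + 1 then
    Finsupp.single ((⟨i.toNat, by omega⟩ : Fin (G + 1)), z) c
  else 0

/-- 𝒥₀ = J₀ ⊗ 1 + 1 ⊗ J₀. -/
def J0c (G : ℕ) (E : ℂ) : Wc G →ₗ[ℂ] Wc G :=
  Finsupp.lsum ℂ fun p => LinearMap.toSpanSingleton ℂ (Wc G)
    (Finsupp.single p (muc G p.1 + mcont E p.2))

/-- 𝒥₊ = J₊ ⊗ 1 + 1 ⊗ J₊. -/
def Jpc (G : ℕ) (j E : ℂ) : Wc G →ₗ[ℂ] Wc G :=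
  Finsupp.lsum ℂ fun p => LinearMap.toSpanSingleton ℂ (Wc G)
    (eVc G ((p.1 : ℕ) + 1) p.2 (Cp (gam G) (muc G p.1)) +
      Finsupp.single (p.1, p.2 + 1) (Cp j (mcont E p.2)))

/-- 𝒥₋ = J₋ ⊗ 1 + 1 ⊗ J₋. -/
def Jmc (G : ℕ) (j E : ℂ) : Wc G →ₗ[ℂ] Wc G :=
  Finsupp.lsum ℂ fun p => LinearMap.toSpanSingleton ℂ (Wc G)
    (eVc G ((p.1 : ℕ) - 1) p.2 (Cm (gam G) (muc G p.1)) +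
      Finsupp.single (p.1, p.2 - 1) (Cm j (mcont E p.2)))

/-- The Casimir 𝒬 = -𝒥₀(𝒥₀+1) + 𝒥₋𝒥₊. -/
def Qc (G : ℕ) (j E : ℂ) : Wc G →ₗ[ℂ] Wc G :=
  -(J0c G E ∘ₗ (J0c G E + LinearMap.id)) + Jmc G j E ∘ₗ Jpc G j E

/-- The 𝒥₀-eigenvalue-M subspace V_M of F_γ ⊗ C^ε_j for M = ε + γ + M₀, M₀ : ℤ:
spanned by the |γ,ν-γ⟩⊗|j,ε+z⟩ with (ν-γ) + (ε+z) = M, i.e. z = G + M₀ - ν. -/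
def VMc (G : ℕ) (M₀ : ℤ) : Submodule ℂ (Wc G) :=
  Submodule.span ℂ
    {w : Wc G | ∃ ν : Fin (G + 1), w = Finsupp.single (ν, (G : ℤ) + M₀ - (ν : ℕ)) 1}

/-- q_(μ) = -(j+μ)(j+μ+1) with μ = t - γ. -/
def qc (G : ℕ) (j : ℂ) (t : Fin (G + 1)) : ℂ :=
  -((j + muc G t) * (j + muc G t + 1))

/-- A linear operator is diagonalizable on an invariant subspace `p` iff `p` is spanned by
eigenvectors of the operator lying in `p`. -/
def DiagOn {V : Type*} [AddCommGroup V] [Module ℂ V]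
    (f : V →ₗ[ℂ] V) (p : Submodule ℂ V) : Prop :=
  Submodule.span ℂ {w : V | w ∈ p ∧ ∃ c : ℂ, f w = c • w} = p

/-!
Adjacent ladder coefficients satisfy `C₋(j, m+1) = C₊(j, m)` and `C₊(j, m)² = -(j-m)(j+m+1)`, so in
the basis `|γ,μ⟩ ⊗ |j,m⟩` of `V_M` the Casimir is tridiagonal with diagonal entries
`-γ(γ+1) - j(j+1) - 2μm`. For `γ = 1/2` and `m = ε + M₀` this is the symmetric matrix
`[[s - t, b], [b, s + t]]` with `s = -(j+1/2)²`, `t = m + 1/2` and `b = i C₊(j, m)`. Its trace is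
`2s` and its determinant `s² - (j+1/2)²`, so its eigenvalues are `s ± (j+1/2)`. An operator with
two distinct eigenvalues on a plane is diagonalizable there; if the eigenvalues coincide it has to
be scalar, which happens only for `b = 0`, that is for `j = m = -1/2`.
-/

section QuadraticOperator

variable {R V : Type*} [CommRing R] [AddCommGroup V] [Module R V] {f : V →ₗ[R] V}
  {p : Submodule R V} {a b : R}

lemma map_sub_smul_eq_smul {w : V} (hw : f (f w) = (a + b) • f w - (a * b) • w) :
    f (f w - b • w) = a • (f w - b • w) := by
  rw [map_sub, map_smul, hw]
  module

lemma eq_or_eq_of_map_eq_smul [IsDomain R] [Module.IsTorsionFree R V] {w : V} {c : R}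
    (hw : f (f w) = (a + b) • f w - (a * b) • w) (hw0 : w ≠ 0) (hc : f w = c • w) :
    c = a ∨ c = b := by
  have hroot : ((c - a) * (c - b)) • w = 0 := by
    rw [hc, map_smul, hc, ← sub_eq_zero] at hw
    rw [← hw]
    module
  simpa [hw0, sub_eq_zero] using hroot

lemma exists_map_eq_smul (hp : p ≠ ⊥) (hinv : p ≤ p.comap f)
    (hquad : ∀ w ∈ p, f (f w) = (a + b) • f w - (a * b) • w)
    (hscalar : (∀ w ∈ p, f w = b • w) → a = b) :
    ∃ w ∈ p, w ≠ 0 ∧ f w = a • w := by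
  by_cases h : ∀ w ∈ p, f w = b • w
  · obtain ⟨w, hw, hw0⟩ := p.ne_bot_iff.1 hp
    exact ⟨w, hw, hw0, hscalar h ▸ h w hw⟩
  · push Not at h
    obtain ⟨w, hw, hne⟩ := h
    exact ⟨f w - b • w, p.sub_mem (hinv hw) (p.smul_mem b hw), sub_ne_zero.2 hne,
      map_sub_smul_eq_smul (hquad w hw)⟩

end QuadraticOperator

section DiagOn

variable {V : Type*} [AddCommGroup V] [Module ℂ V] {f : V →ₗ[ℂ] V} {p : Submodule ℂ V} {a b : ℂ}

lemma DiagOn.of_ne (hab : a ≠ b) (hinv : p ≤ p.comap f)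
    (hquad : ∀ w ∈ p, f (f w) = (a + b) • f w - (a * b) • w) : DiagOn f p := by
  refine le_antisymm (Submodule.span_le.2 fun w hw => hw.1) fun w hw => ?_
  have ha : f w - b • w ∈ Submodule.span ℂ {w | w ∈ p ∧ ∃ c : ℂ, f w = c • w} :=
    Submodule.subset_span
      ⟨p.sub_mem (hinv hw) (p.smul_mem b hw), a, map_sub_smul_eq_smul (hquad w hw)⟩
  have hb : f w - a • w ∈ Submodule.span ℂ {w | w ∈ p ∧ ∃ c : ℂ, f w = c • w} :=
    Submodule.subset_span
      ⟨p.sub_mem (hinv hw) (p.smul_mem a hw), b,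
        map_sub_smul_eq_smul (by rw [add_comm b, mul_comm b, hquad w hw])⟩
  refine (Submodule.smul_mem_iff _ (sub_ne_zero.2 hab)).1 ?_
  convert Submodule.sub_mem _ ha hb using 1
  module

lemma DiagOn.of_map_eq_smul (h : ∀ w ∈ p, f w = a • w) : DiagOn f p :=
  le_antisymm (Submodule.span_le.2 fun _ hw => hw.1) fun w hw =>
    Submodule.subset_span ⟨hw, a, h w hw⟩

lemma DiagOn.map_eq_smul (h : DiagOn f p)
    (hquad : ∀ w ∈ p, f (f w) = (a + a) • f w - (a * a) • w) {w : V} (hw : w ∈ p) :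
    f w = a • w := by
  rw [← h] at hw
  refine LinearMap.eqOn_span (g := a • LinearMap.id) ?_ hw
  rintro w ⟨hw, c, hc⟩
  rcases eq_or_ne w 0 with rfl | hw0
  · simp
  · have hca : c = a := by simpa using eq_or_eq_of_map_eq_smul (hquad w hw) hw0 hc
    simpa [hca] using hc

lemma diagOn_iff_ne_or_map_eq_smul (hinv : p ≤ p.comap f)
    (hquad : ∀ w ∈ p, f (f w) = (a + b) • f w - (a * b) • w) :
    DiagOn f p ↔ a ≠ b ∨ ∀ w ∈ p, f w = a • w := by
  refine ⟨fun h => or_iff_not_imp_left.2 fun hab => ?_, ?_⟩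
  · obtain rfl := not_not.1 hab
    exact fun w hw => h.map_eq_smul hquad hw
  · rintro (hab | hscalar)
    exacts [.of_ne hab hinv hquad, .of_map_eq_smul hscalar]

end DiagOn

section Plane

variable {R V : Type*} [CommRing R] [AddCommGroup V] [Module R V] {f : V →ₗ[R] V} {u v : V}
  {α β γ δ a b : R}

lemma span_pair_le_comap (hu : f u = α • u + β • v) (hv : f v = γ • u + δ • v) :
    Submodule.span R {u, v} ≤ (Submodule.span R {u, v}).comap f := by
  rw [Submodule.span_le]
  rintro w (rfl | rfl)
  · exact Submodule.mem_span_pair.2 ⟨α, β, hu.symm⟩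
  · exact Submodule.mem_span_pair.2 ⟨γ, δ, hv.symm⟩

-- The Cayley–Hamilton theorem, with the trace and the determinant written in the eigenvalues.
lemma map_map_of_mem_span_pair (hu : f u = α • u + β • v) (hv : f v = γ • u + δ • v)
    (htr : a + b = α + δ) (hdet : a * b = α * δ - β * γ) {w : V}
    (hw : w ∈ Submodule.span R {u, v}) : f (f w) = (a + b) • f w - (a * b) • w := by
  obtain ⟨x, y, rfl⟩ := Submodule.mem_span_pair.1 hw
  simp only [map_add, map_smul, hu, hv, htr, hdet]
  module

lemma forall_mem_span_pair_map_eq_smul_iff (hli : LinearIndependent R ![u, v])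
    (hu : f u = α • u + β • v) (hv : f v = γ • u + δ • v) {c : R} :
    (∀ w ∈ Submodule.span R {u, v}, f w = c • w) ↔ (α = c ∧ β = 0) ∧ γ = 0 ∧ δ = c := by
  rw [LinearIndependent.pair_iff] at hli
  constructor
  · intro h
    have hcu := h u (Submodule.subset_span (by simp))
    have hcv := h v (Submodule.subset_span (by simp))
    rw [hu, ← sub_eq_zero] at hcu
    rw [hv, ← sub_eq_zero] at hcv
    obtain ⟨hα, hβ⟩ := hli (α - c) β (by rw [← hcu]; module)
    obtain ⟨hγ, hδ⟩ := hli γ (δ - c) (by rw [← hcv]; module)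
    exact ⟨⟨sub_eq_zero.1 hα, hβ⟩, hγ, sub_eq_zero.1 hδ⟩
  · rintro ⟨⟨rfl, rfl⟩, rfl, rfl⟩ w hw
    obtain ⟨x, y, rfl⟩ := Submodule.mem_span_pair.1 hw
    simp only [map_add, map_smul, hu, hv]
    module

lemma exists_map_eq_smul_span_pair [Nontrivial R] (hli : LinearIndependent R ![u, v])
    (hu : f u = α • u + β • v) (hv : f v = γ • u + δ • v)
    (htr : a + b = α + δ) (hdet : a * b = α * δ - β * γ) :
    ∃ w ∈ Submodule.span R {u, v}, w ≠ 0 ∧ f w = a • w := by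
  have hu0 : u ≠ 0 := hli.ne_zero 0
  refine exists_map_eq_smul (b := b) ?_ (span_pair_le_comap hu hv)
    (fun w hw => map_map_of_mem_span_pair hu hv htr hdet hw) fun h => ?_
  · exact (Submodule.ne_bot_iff _).2 ⟨u, Submodule.subset_span (by simp), hu0⟩
  · obtain ⟨⟨rfl, -⟩, -, rfl⟩ := (forall_mem_span_pair_map_eq_smul_iff hli hu hv).1 h
    exact add_right_cancel htr

lemma exists_map_eq_smul_span_pair_iff [IsDomain R] [Module.IsTorsionFree R V]
    (hli : LinearIndependent R ![u, v])
    (hu : f u = α • u + β • v) (hv : f v = γ • u + δ • v)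
    (htr : a + b = α + δ) (hdet : a * b = α * δ - β * γ) (c : R) :
    (∃ w ∈ Submodule.span R {u, v}, w ≠ 0 ∧ f w = c • w) ↔ c = a ∨ c = b := by
  constructor
  · rintro ⟨w, hw, hw0, hc⟩
    exact eq_or_eq_of_map_eq_smul (map_map_of_mem_span_pair hu hv htr hdet hw) hw0 hc
  · rintro (rfl | rfl)
    · exact exists_map_eq_smul_span_pair hli hu hv htr hdet
    · exact exists_map_eq_smul_span_pair hli hu hv (by rw [add_comm, htr])
        (by rw [mul_comm, hdet])

lemma diagOn_span_pair_iff {V : Type*} [AddCommGroup V] [Module ℂ V] {f : V →ₗ[ℂ] V} {u v : V}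
    {α β γ δ a b : ℂ} (hli : LinearIndependent ℂ ![u, v])
    (hu : f u = α • u + β • v) (hv : f v = γ • u + δ • v)
    (htr : a + b = α + δ) (hdet : a * b = α * δ - β * γ) :
    DiagOn f (Submodule.span ℂ {u, v}) ↔ a ≠ b ∨ (β = 0 ∧ γ = 0) := by
  rw [diagOn_iff_ne_or_map_eq_smul (span_pair_le_comap hu hv)
      (fun w hw => map_map_of_mem_span_pair hu hv htr hdet hw),
    forall_mem_span_pair_map_eq_smul_iff hli hu hv]
  refine or_congr_right' fun hab => ⟨fun h => ⟨h.1.2, h.2.1⟩, ?_⟩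
  obtain rfl := not_not.1 hab
  rintro ⟨rfl, rfl⟩
  have hα : (α - a) ^ 2 = 0 := by linear_combination hdet - α * htr
  have hαa : α = a := sub_eq_zero.1 (pow_eq_zero_iff two_ne_zero |>.1 hα)
  exact ⟨⟨hαa, rfl⟩, rfl, by linear_combination -htr - hαa⟩

end Plane

section LadderCoefficients

lemma csqrt_sq (z : ℂ) : csqrt z ^ 2 = z := by
  rw [csqrt, one_div]
  exact Complex.cpow_nat_inv_pow z two_ne_zero

lemma csqrt_one : csqrt 1 = 1 := Complex.one_cpow _

lemma Cm_add_one (j m : ℂ) : Cm j (m + 1) = Cp j m := by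
  rw [Cm, Cp, ← add_assoc, sub_add_eq_sub_sub, sub_add_cancel]
  ring

lemma Cp_sq (j m : ℂ) : Cp j m ^ 2 = -((j - m) * (j + m + 1)) := by
  rw [Cp, mul_pow, mul_pow, Complex.I_sq, csqrt_sq, csqrt_sq]
  ring

lemma Cp_eq_zero_iff {j m : ℂ} : Cp j m = 0 ↔ m = j ∨ m = -j - 1 := by
  rw [← sq_eq_zero_iff, Cp_sq, neg_eq_zero, mul_eq_zero, sub_eq_zero, eq_comm]
  refine or_congr_right ⟨fun h => ?_, fun h => ?_⟩ <;> linear_combination h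

lemma Cp_half_neg_half : Cp (1 / 2) (-(1 / 2)) = Complex.I := by
  norm_num [Cp, csqrt_one]

end LadderCoefficients

section Casimir

variable (G : ℕ) (j E : ℂ) (i z : ℤ)

variable {G i} in
lemma exists_fin_eq_coe (hi : 0 ≤ i ∧ i < (G : ℤ) + 1) : ∃ ν : Fin (G + 1), i = (ν : ℕ) :=
  ⟨⟨i.toNat, by omega⟩, by simp [hi.1]⟩

lemma eVc_coe (ν : Fin (G + 1)) (c : ℂ) : eVc G (ν : ℕ) z c = Finsupp.single (ν, z) c := by
  rw [eVc, dif_pos (by omega)]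
  simp

variable {G i} in
lemma eVc_of_notMem (hi : ¬(0 ≤ i ∧ i < (G : ℤ) + 1)) (c : ℂ) : eVc G i z c = 0 :=
  dif_neg hi

lemma eVc_eq_smul (c : ℂ) : eVc G i z c = c • eVc G i z 1 := by
  unfold eVc
  split_ifs <;> simp

lemma J0c_eVc : J0c G E (eVc G i z 1) = (i - gam G + mcont E z) • eVc G i z 1 := by
  by_cases hi : 0 ≤ i ∧ i < (G : ℤ) + 1
  · obtain ⟨ν, rfl⟩ := exists_fin_eq_coe hi
    simp [eVc_coe, J0c, muc]
  · simp [eVc_of_notMem z hi]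

-- At `i = -1` both sides vanish because `C₊(γ, -γ-1) = 0`.
lemma Jpc_eVc : Jpc G j E (eVc G i z 1) =
    Cp (gam G) (i - gam G) • eVc G (i + 1) z 1 + Cp j (mcont E z) • eVc G i (z + 1) 1 := by
  by_cases hi : 0 ≤ i ∧ i < (G : ℤ) + 1
  · obtain ⟨ν, rfl⟩ := exists_fin_eq_coe hi
    simp [eVc_coe, Jpc, muc, eVc_eq_smul G _ z (Cp _ _)]
  · rw [eVc_of_notMem z hi, eVc_of_notMem (z + 1) hi, map_zero, smul_zero, add_zero]
    rcases eq_or_ne i (-1) with rfl | hne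
    · rw [Cp_eq_zero_iff.2 (.inr (by push_cast; ring)), zero_smul]
    · rw [eVc_of_notMem z (by omega), smul_zero]

-- At `i = 2γ + 1` both sides vanish because `C₋(γ, γ+1) = 0`.
lemma Jmc_eVc : Jmc G j E (eVc G i z 1) =
    Cm (gam G) (i - gam G) • eVc G (i - 1) z 1 + Cm j (mcont E z) • eVc G i (z - 1) 1 := by
  by_cases hi : 0 ≤ i ∧ i < (G : ℤ) + 1
  · obtain ⟨ν, rfl⟩ := exists_fin_eq_coe hi
    simp [eVc_coe, Jmc, muc, eVc_eq_smul G _ z (Cm _ _)]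
  · rw [eVc_of_notMem z hi, eVc_of_notMem (z - 1) hi, map_zero, smul_zero, add_zero]
    rcases eq_or_ne i (G + 1) with rfl | hne
    · have hweight : (((G : ℤ) + 1 : ℤ) : ℂ) - gam G = gam G + 1 := by
        push_cast [gam]
        ring
      rw [hweight, Cm_add_one, Cp_eq_zero_iff.2 (.inl rfl), zero_smul]
    · rw [eVc_of_notMem z (by omega), smul_zero]

lemma Qc_eVc : Qc G j E (eVc G i z 1) =
    (-(gam G * (gam G + 1)) - j * (j + 1) - 2 * (i - gam G) * mcont E z) • eVc G i z 1 +
      (Cp (gam G) (i - gam G) * Cm j (mcont E z)) • eVc G (i + 1) (z - 1) 1 +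
      (Cp j (mcont E z) * Cm (gam G) (i - gam G)) • eVc G (i - 1) (z + 1) 1 := by
  have hi : ((i + 1 : ℤ) : ℂ) - gam G = i - gam G + 1 := by push_cast; ring
  have hz : mcont E (z + 1) = mcont E z + 1 := by simp [mcont, add_assoc]
  have hγ := Cp_sq (gam G) (i - gam G)
  have hj := Cp_sq j (mcont E z)
  simp only [Qc, LinearMap.add_apply, LinearMap.neg_apply, LinearMap.comp_apply,
    LinearMap.id_apply, map_add, map_smul, J0c_eVc, Jpc_eVc, Jmc_eVc, hi, hz, Cm_add_one,
    add_sub_cancel_right]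
  match_scalars
  · linear_combination hγ + hj
  · ring
  · ring

end Casimir

section HalfCoupling

variable (j E : ℂ) (M₀ : ℤ)

lemma gam_one : gam 1 = 1 / 2 := by simp [gam]

lemma VMc_one : VMc 1 M₀ = Submodule.span ℂ {eVc 1 1 M₀ 1, eVc 1 0 (M₀ + 1) 1} := by
  unfold VMc
  congr 1
  ext w
  simp [eVc, Fin.exists_fin_two, or_comm, add_comm]

lemma linearIndependent_eVc_one :
    LinearIndependent ℂ ![eVc 1 1 M₀ 1, eVc 1 0 (M₀ + 1) 1] := by
  refine LinearIndependent.pair_iff.2 fun x y h => ⟨?_, ?_⟩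
  · simpa [eVc] using DFunLike.congr_fun h (1, M₀)
  · simpa [eVc] using DFunLike.congr_fun h (0, M₀ + 1)

lemma Qc_one_eVc_one : Qc 1 j E (eVc 1 1 M₀ 1) =
    (-(j + 1 / 2) ^ 2 - (E + M₀ + 1 / 2)) • eVc 1 1 M₀ 1 +
      (Complex.I * Cp j (E + M₀)) • eVc 1 0 (M₀ + 1) 1 := by
  have hCm : Cm (1 / 2) (1 / 2) = Complex.I := by
    rw [← Cp_half_neg_half, ← Cm_add_one]
    norm_num
  rw [Qc_eVc, eVc_of_notMem (i := 1 + 1) _ (by norm_num), gam_one, mcont, Int.cast_one,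
    show (1 : ℂ) - 1 / 2 = 1 / 2 by norm_num, hCm, sub_self]
  module

lemma Qc_one_eVc_zero : Qc 1 j E (eVc 1 0 (M₀ + 1) 1) =
    (Complex.I * Cp j (E + M₀)) • eVc 1 1 M₀ 1 +
      (-(j + 1 / 2) ^ 2 + (E + M₀ + 1 / 2)) • eVc 1 0 (M₀ + 1) 1 := by
  rw [Qc_eVc, eVc_of_notMem (i := 0 - 1) _ (by norm_num), gam_one, mcont, Int.cast_zero, zero_sub,
    Cp_half_neg_half, Int.cast_add, Int.cast_one, ← add_assoc, Cm_add_one, add_sub_cancel_right,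
    zero_add]
  module

end HalfCoupling

/-- In terms of `M = E + 1/2 + M₀`, the exceptional case `E + M₀ = -(1 / 2)` is `M = 0`, where `𝒬`
is scalar on `V_M` if `j = -(1 / 2)`. -/
theorem Qc_half_diagonalizable_iff_general (E j : ℂ) (M₀ : ℤ) :
    (DiagOn (Qc 1 j E) (VMc 1 M₀) ↔ j ≠ -(1 / 2) ∨ E + M₀ = -(1 / 2)) ∧
    (∀ c : ℂ,
      (∃ w ∈ VMc 1 M₀, w ≠ 0 ∧ Qc 1 j E w = c • w) ↔
        (c = -((j - 1 / 2) * (j + 1 / 2)) ∨ c = -((j + 1 / 2) * (j + 3 / 2)))) ∧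
    (-((j - 1 / 2) * (j + 1 / 2)) ≠ -((j + 1 / 2) * (j + 3 / 2)) ↔ j ≠ -(1 / 2)) := by
  have hli := linearIndependent_eVc_one M₀
  have hu := Qc_one_eVc_one j E M₀
  have hv := Qc_one_eVc_zero j E M₀
  have htr : -((j - 1 / 2) * (j + 1 / 2)) + -((j + 1 / 2) * (j + 3 / 2)) =
      -(j + 1 / 2) ^ 2 - (E + M₀ + 1 / 2) + (-(j + 1 / 2) ^ 2 + (E + M₀ + 1 / 2)) := by ring
  have hdet : -((j - 1 / 2) * (j + 1 / 2)) * -((j + 1 / 2) * (j + 3 / 2)) =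
      (-(j + 1 / 2) ^ 2 - (E + M₀ + 1 / 2)) * (-(j + 1 / 2) ^ 2 + (E + M₀ + 1 / 2)) -
        Complex.I * Cp j (E + M₀) * (Complex.I * Cp j (E + M₀)) := by
    linear_combination Cp j (E + M₀) ^ 2 * Complex.I_sq - Cp_sq j (E + M₀)
  have hne : -((j - 1 / 2) * (j + 1 / 2)) ≠ -((j + 1 / 2) * (j + 3 / 2)) ↔ j ≠ -(1 / 2) :=
    not_congr ⟨fun h => by linear_combination h / 2, fun h => by rw [h]; norm_num⟩
  rw [VMc_one]
  refine ⟨?_, exists_map_eq_smul_span_pair_iff hli hu hv htr hdet, hne⟩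
  rw [diagOn_span_pair_iff hli hu hv htr hdet, hne, and_self, mul_eq_zero,
    or_iff_right Complex.I_ne_zero, Cp_eq_zero_iff]
  refine or_congr_right' fun hj => ?_
  rw [not_not.1 hj]
  norm_num

/-- For the coupling F_{1/2} ⊗ C^ε_j (γ = 1/2, i.e. G = 1), and any M
(M = ε + 1/2 + M₀' with M₀' ∈ ℤ; here M = ε + γ + M₀), the 2×2 restriction of 𝒬 to V_M is
diagonalizable iff j ≠ -1/2, in which case its eigenvalues are exactly the two distinct
values q_(-1/2) = -(j-1/2)(j+1/2) and q_(1/2) = -(j+1/2)(j+3/2). -/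
theorem Qc_half_diagonalizable_iff (E j : ℂ) (hE : E = 0 ∨ E = 1 / 2)
    (hj : (∃ n : ℤ, 2 * j = (n : ℂ)) → ¬ ∃ n : ℤ, j - E = (n : ℂ)) (M₀ : ℤ) :
    (DiagOn (Qc 1 j E) (VMc 1 M₀) ↔ j ≠ -(1 / 2)) ∧
    (j ≠ -(1 / 2) →
      (∀ c : ℂ,
        (∃ w ∈ VMc 1 M₀, w ≠ 0 ∧ Qc 1 j E w = c • w) ↔
          (c = -((j - 1 / 2) * (j + 1 / 2)) ∨ c = -((j + 1 / 2) * (j + 3 / 2)))) ∧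
      -((j - 1 / 2) * (j + 1 / 2)) ≠ -((j + 1 / 2) * (j + 3 / 2))) := by
  obtain ⟨hdiag, heig, hne⟩ := Qc_half_diagonalizable_iff_general E j M₀
  refine ⟨hdiag.trans (or_iff_left_of_imp fun hM h => ?_), fun h => ⟨heig, hne.2 h⟩⟩
  exact hj ⟨-1, by rw [h]; norm_num⟩ ⟨M₀, by linear_combination h - hM⟩

end
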